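/- arXiv:1705.00311 — 2 statements merged into one kernel-verified Lean document; each statement's English description precedes it below -/
import Mathlib

section
/- Let n ≥ 2 and let E = EuclideanSpace ℝ n. Denote by μ^{n-1} the (n-1)-dimensional Hausdorff measure and by μ^{n-2} the (n-2)-dimensional Hausdorff measure on E. Then for every continuous function f : E × E → ℝ, the iterated integrals over the Stiefel manifold of orthonormal 2-frames agree in either order: ∫_{u ∈ S} ( ∫_{v ∈ S, ⟪u,v⟫ = 0} f(u,v) dμ^{n-2}(v) ) dμ^{n-1}(u) = ∫_{v ∈ S} ( ∫_{u ∈ S, ⟪u,v⟫ = 0} f(u,v) dμ^{n-2}(u) ) dμ^{n-1}(v), where S = {w ∈ E : ‖w‖ = 1} is the unit sphere and ⟪·,·⟫ is the standard inner product. -/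
open MeasureTheory Metric Module Topology
open scoped RealInnerProductSpace ENNReal

lemma sphere_finite {F : Type*} [NormedAddCommGroup F] [InnerProductSpace ℝ F]
    [FiniteDimensional ℝ F] [MeasurableSpace F] [BorelSpace F] (k : ℕ)
    (h : finrank ℝ F = k + 1) : μH[(k : ℝ)] (sphere (0 : F) 1) < ∞ := by
  have : Fact (finrank ℝ F = k + 1) := ⟨h⟩
  refine (isCompact_sphere (0 : F) 1).measure_lt_top_of_nhdsWithin fun x hx => ?_
  have hv : ‖-x‖ = 1 := by simpa using hx
  have hv0 : -x ≠ 0 := by intro h0; simp [h0] at hv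
  have hfr : finrank ℝ (ℝ ∙ (-x))ᗮ = k := Submodule.finrank_orthogonal_span_singleton hv0
  have hcd : ContDiff ℝ 1 (fun w : (ℝ ∙ (-x))ᗮ => stereoInvFunAux (-x) (w : F)) :=
    contDiff_stereoInvFunAux.comp (ℝ ∙ (-x))ᗮ.subtypeL.contDiff
  obtain ⟨K, U, hU, hL⟩ := hcd.contDiffAt.exists_lipschitzOnWith (x := 0)
  set U' := U ∩ closedBall 0 1
  have hU' : U' ∈ 𝓝 (0 : (ℝ ∙ (-x))ᗮ) := Filter.inter_mem hU (closedBall_mem_nhds _ one_pos)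
  refine ⟨(fun w : (ℝ ∙ (-x))ᗮ => stereoInvFunAux (-x) (w : F)) '' U', ?_, ?_⟩
  · have h1 := (isOpenEmbedding_stereographic_symm hv).isOpenMap.image_mem_nhds hU'
    have h0 : (stereographic hv).symm 0 = ⟨x, hx⟩ := by
      ext
      change stereoInvFunAux (-x) _ = x
      simp [stereoInvFunAux]
    rw [h0] at h1
    have h2 := Filter.image_mem_map (m := ((↑) : sphere (0:F) 1 → F)) h1
    rw [map_nhds_subtype_val, Set.image_image] at h2
    exact h2
  · have h3 := (hL.mono (Set.inter_subset_left (t := closedBall 0 1))).hausdorffMeasure_image_le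
      (d := k) (by positivity)
    refine h3.trans_lt (ENNReal.mul_lt_top (by simp) ?_)
    refine (measure_mono Set.inter_subset_right).trans_lt ?_
    have := isAddHaarMeasure_hausdorffMeasure (E := (ℝ ∙ (-x))ᗮ)
    rw [hfr] at this
    exact (isCompact_closedBall _ _).measure_lt_top

abbrev EE (n : ℕ) := EuclideanSpace ℝ (Fin n)
noncomputable abbrev GG (n : ℕ) := unitary (EE n →L[ℝ] EE n)

instance (n : ℕ) : ContinuousStar (EE n →L[ℝ] EE n) :=
  ⟨(ContinuousLinearMap.adjoint (𝕜 := ℝ) (E := EE n) (F := EE n)).continuous⟩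

instance (n : ℕ) : CompactSpace (GG n) := by
  refine (isCompact_iff_compactSpace (s := (unitary (EE n →L[ℝ] EE n) : Set (EE n →L[ℝ] EE n)))).mp ?_
  have : ProperSpace (EE n →L[ℝ] EE n) := FiniteDimensional.proper ℝ _
  refine Metric.isCompact_of_isClosed_isBounded isClosed_unitary ?_
  refine (isBounded_iff_forall_norm_le).2 ⟨1, fun x hx => ?_⟩
  refine x.opNorm_le_bound zero_le_one fun y => ?_
  rw [x.norm_map_of_mem_unitary hx, one_mul]

instance (n : ℕ) : SecondCountableTopology (GG n) := by
  have : ProperSpace (EE n →L[ℝ] EE n) := FiniteDimensional.proper ℝ _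
  infer_instance


lemma exists_m (n : ℕ) : ∃ m : Measure (GG n), m.IsMulRightInvariant ∧ IsProbabilityMeasure m := by
  let m := Measure.haarMeasure (⊤ : TopologicalSpace.PositiveCompacts (GG n))
  refine ⟨m.inv, inferInstance, ⟨?_⟩⟩
  rw [Measure.inv_apply]
  simpa using Measure.haarMeasure_self (K₀ := (⊤ : TopologicalSpace.PositiveCompacts (GG n)))

lemma exists_g (n : ℕ) (s : Set (Fin n)) (v w : Fin n → EE n)
    (hv : Orthonormal ℝ (s.domRestrict v)) (hw : Orthonormal ℝ (s.domRestrict w)) :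
    ∃ g : GG n, ∀ i ∈ s, (g : EE n →L[ℝ] EE n) (v i) = w i := by
  obtain ⟨b, hb⟩ := hv.exists_orthonormalBasis_extension_of_card_eq (by simp)
  obtain ⟨c, hc⟩ := hw.exists_orthonormalBasis_extension_of_card_eq (by simp)
  refine ⟨Unitary.linearIsometryEquiv.symm (b.equiv c (Equiv.refl _)), fun i hi => ?_⟩
  rw [← hb i hi, ← hc i hi]
  simp

lemma exists_g1 (n : ℕ) (hn : 2 ≤ n) (u u' : EE n) (hu : ‖u‖ = 1) (hu' : ‖u'‖ = 1) :
    ∃ g : GG n, (g : EE n →L[ℝ] EE n) u = u' := by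
  obtain ⟨g, hg⟩ := exists_g n {⟨0, by omega⟩} (fun _ => u) (fun _ => u')
    (by constructor
        · intro i; simpa using hu
        · intro i j hij; exact absurd (Subsingleton.elim i j) hij)
    (by constructor
        · intro i; simpa using hu'
        · intro i j hij; exact absurd (Subsingleton.elim i j) hij)
  exact ⟨g, hg _ rfl⟩

lemma orth_aux (n : ℕ) (i j : Fin n) (hij : i ≠ j) (u v : EE n) (hu : ‖u‖ = 1) (hv : ‖v‖ = 1)
    (h : ⟪u, v⟫ = 0) :
    Orthonormal ℝ (({i, j} : Set (Fin n)).domRestrict (fun k => if k = i then u else v)) := by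
  constructor
  · rintro ⟨k, rfl | rfl⟩
    · simpa using hu
    · simpa [hij.symm] using hv
  · rintro ⟨k, rfl | rfl⟩ ⟨l, rfl | rfl⟩ hkl
    · exact absurd rfl hkl
    · simpa [hij.symm] using h
    · simpa [hij.symm, real_inner_comm] using h
    · exact absurd rfl hkl

lemma exists_g2 (n : ℕ) (hn : 2 ≤ n) (u v u' v' : EE n) (hu : ‖u‖ = 1) (hu' : ‖u'‖ = 1)
    (hv : ‖v‖ = 1) (hv' : ‖v'‖ = 1) (h : ⟪u, v⟫ = 0) (h' : ⟪u', v'⟫ = 0) :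
    ∃ g : GG n, (g : EE n →L[ℝ] EE n) u = u' ∧ (g : EE n →L[ℝ] EE n) v = v' := by
  have hij : (⟨0, by omega⟩ : Fin n) ≠ ⟨1, by omega⟩ := by simp
  obtain ⟨g, hg⟩ := exists_g n _ _ _ (orth_aux n _ _ hij u v hu hv h)
    (orth_aux n _ _ hij u' v' hu' hv' h')
  exact ⟨g, by simpa using hg _ (Or.inl rfl), by simpa using hg _ (Or.inr rfl)⟩

lemma cont_act (n : ℕ) : Continuous (fun p : GG n × EE n => (p.1 : EE n →L[ℝ] EE n) p.2) := by
  fun_prop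

lemma hausdorff_pres (n : ℕ) (g : GG n) (d : ℝ) :
    MeasurePreserving (fun x : EE n => (g : EE n →L[ℝ] EE n) x) μH[d] μH[d] :=
  (Unitary.linearIsometryEquiv g).toIsometryEquiv.measurePreserving_hausdorffMeasure d

lemma emb_act (n : ℕ) (g : GG n) :
    MeasurableEmbedding (fun x : EE n => (g : EE n →L[ℝ] EE n) x) :=
  (Unitary.linearIsometryEquiv g).toHomeomorph.measurableEmbedding

lemma sigma_eq (n : ℕ) (hn : 2 ≤ n) (m : Measure (GG n)) [m.IsMulRightInvariant]
    [IsProbabilityMeasure m] (d : ℝ) (hfin : μH[d] {w : EE n | ‖w‖ = 1} < ∞)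
    (a : EE n) (ha : ‖a‖ = 1) :
    (μH[d]).restrict {w : EE n | ‖w‖ = 1} =
      μH[d] {w : EE n | ‖w‖ = 1} • m.map (fun g : GG n => (g : EE n →L[ℝ] EE n) a) := by
  have hS : MeasurableSet {w : EE n | ‖w‖ = 1} := (isClosed_eq continuous_norm continuous_const).measurableSet
  have hmeas := (cont_act n).measurable
  have hma : Measurable (fun g : GG n => (g : EE n →L[ℝ] EE n) a) :=
    hmeas.comp (measurable_id.prodMk measurable_const)
  have : IsFiniteMeasure ((μH[d]).restrict {w : EE n | ‖w‖ = 1}) := ⟨by simpa using hfin⟩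
  ext A hA
  have hF : Measurable (fun p : GG n × EE n =>
      A.indicator (1 : EE n → ℝ≥0∞) ((p.1 : EE n →L[ℝ] EE n) p.2)) :=
    (measurable_one.indicator hA).comp hmeas
  have h1 : ∀ g : GG n, ∫⁻ u in {w : EE n | ‖w‖ = 1},
      A.indicator (1 : EE n → ℝ≥0∞) ((g : EE n →L[ℝ] EE n) u) ∂μH[d] =
      (μH[d]).restrict {w : EE n | ‖w‖ = 1} A := by
    intro g
    have := (hausdorff_pres n g d).setLIntegral_comp_preimage hS (measurable_one.indicator hA)
    have hpre : (fun x : EE n => (g : EE n →L[ℝ] EE n) x) ⁻¹' {w : EE n | ‖w‖ = 1}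
        = {w : EE n | ‖w‖ = 1} := by
      ext x; simp [Unitary.norm_map]
    rw [hpre, lintegral_indicator_one hA] at this
    exact this
  have h2 : ∀ u ∈ {w : EE n | ‖w‖ = 1}, ∫⁻ g,
      A.indicator (1 : EE n → ℝ≥0∞) ((g : EE n →L[ℝ] EE n) u) ∂m =
      m.map (fun g : GG n => (g : EE n →L[ℝ] EE n) a) A := by
    intro u hu
    obtain ⟨k, rfl⟩ := exists_g1 n hn a u ha hu
    rw [← lintegral_indicator_one hA, lintegral_map (measurable_one.indicator hA) hma]
    exact lintegral_mul_right_eq_self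
      (fun g : GG n => A.indicator (1 : EE n → ℝ≥0∞) ((g : EE n →L[ℝ] EE n) a)) k
  calc (μH[d]).restrict {w : EE n | ‖w‖ = 1} A
      = ∫⁻ _ : GG n, (μH[d]).restrict {w : EE n | ‖w‖ = 1} A ∂m := by simp
    _ = ∫⁻ g, ∫⁻ u in {w : EE n | ‖w‖ = 1},
      A.indicator (1 : EE n → ℝ≥0∞) ((g : EE n →L[ℝ] EE n) u) ∂μH[d] ∂m := by simp_rw [h1]
    _ = ∫⁻ u in {w : EE n | ‖w‖ = 1}, ∫⁻ g,
      A.indicator (1 : EE n → ℝ≥0∞) ((g : EE n →L[ℝ] EE n) u) ∂m ∂μH[d] :=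
        lintegral_lintegral_swap hF.aemeasurable
    _ = ∫⁻ u in {w : EE n | ‖w‖ = 1}, m.map (fun g : GG n => (g : EE n →L[ℝ] EE n) a) A ∂μH[d] :=
        setLIntegral_congr_fun hS h2
    _ = _ := by simp [mul_comm]

lemma tau_eq (n : ℕ) (d : ℝ) (a : EE n) (g : GG n) (φ : EE n → ℝ) :
    ∫ v in {w : EE n | ‖w‖ = 1 ∧ ⟪(g : EE n →L[ℝ] EE n) a, w⟫ = 0}, φ v ∂μH[d]
    = ∫ v in {w : EE n | ‖w‖ = 1 ∧ ⟪a, w⟫ = 0}, φ ((g : EE n →L[ℝ] EE n) v) ∂μH[d] := by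
  rw [← (hausdorff_pres n g d).setIntegral_preimage_emb (emb_act n g)]
  congr 2
  ext x
  simp [Unitary.norm_map, Unitary.inner_map_map]

lemma tau_finite (n : ℕ) (hn : 2 ≤ n) (a : EE n) (ha : ‖a‖ = 1) :
    μH[(n : ℝ) - 2] {w : EE n | ‖w‖ = 1 ∧ ⟪a, w⟫ = 0} < ∞ := by
  obtain ⟨k, rfl⟩ := Nat.exists_eq_add_of_le' hn
  have ha0 : a ≠ 0 := by intro h0; simp [h0] at ha
  have : Fact (finrank ℝ (EE (k + 2)) = (k + 1) + 1) := ⟨by simp⟩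
  have h := sphere_finite (F := (ℝ ∙ a)ᗮ) k (Submodule.finrank_orthogonal_span_singleton ha0)
  have h2 := (ℝ ∙ a)ᗮ.subtypeₗᵢ.isometry.hausdorffMeasure_image (d := (k : ℝ))
    (Or.inl (by positivity)) (sphere 0 1)
  rw [← h2] at h
  have e : ((k + 2 : ℕ) : ℝ) - 2 = k := by push_cast; ring
  rw [e]
  refine (measure_mono ?_).trans_lt h
  rintro w ⟨hw, haw⟩
  exact ⟨⟨w, Submodule.mem_orthogonal_singleton_iff_inner_right.2 haw⟩, by simpa using hw, rfl⟩

lemma sigma_finite (n : ℕ) (hn : 2 ≤ n) :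
    μH[(n : ℝ) - 1] {w : EE n | ‖w‖ = 1} < ∞ := by
  obtain ⟨k, rfl⟩ := Nat.exists_eq_add_of_le' hn
  have h := sphere_finite (F := EE (k + 2)) (k + 1) (by simp)
  have e : ((k + 2 : ℕ) : ℝ) - 1 = ((k + 1 : ℕ) : ℝ) := by push_cast; ring
  rw [e]
  convert h using 2
  ext; simp

lemma main_formula (n : ℕ) (hn : 2 ≤ n) (m : Measure (GG n)) [m.IsMulRightInvariant]
    [IsProbabilityMeasure m] (f : EE n × EE n → ℝ) (hf : Continuous f)
    (a b : EE n) (ha : ‖a‖ = 1) (hb : ‖b‖ = 1) (hab : ⟪a, b⟫ = 0) :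
    ∫ u in {w : EE n | ‖w‖ = 1},
      (∫ v in {w : EE n | ‖w‖ = 1 ∧ ⟪u, w⟫ = 0}, f (u, v) ∂(μH[(n : ℝ) - 2])) ∂(μH[(n : ℝ) - 1])
    = (μH[(n : ℝ) - 1] {w : EE n | ‖w‖ = 1}).toReal *
      ((μH[(n : ℝ) - 2] {w : EE n | ‖w‖ = 1 ∧ ⟪a, w⟫ = 0}).toReal *
      ∫ g : GG n, f ((g : EE n →L[ℝ] EE n) a, (g : EE n →L[ℝ] EE n) b) ∂m) := by
  set T : Set (EE n) := {w : EE n | ‖w‖ = 1 ∧ ⟪a, w⟫ = 0} with hT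
  have hTc : IsClosed T := (isClosed_eq continuous_norm continuous_const).inter
    (isClosed_eq (by fun_prop) continuous_const)
  have hTk : IsCompact T := (isCompact_sphere (0 : EE n) 1).of_isClosed_subset hTc
    (fun w hw => by simpa using hw.1)
  have hSc : IsClosed {w : EE n | ‖w‖ = 1} := isClosed_eq continuous_norm continuous_const
  have hτ : IsFiniteMeasure ((μH[(n : ℝ) - 2]).restrict T) := ⟨by simpa using tau_finite n hn a ha⟩
  have hact := cont_act n
  have hca : Continuous (fun g : GG n => (g : EE n →L[ℝ] EE n) a) := by fun_prop
  have hF : Continuous (fun p : GG n × EE n =>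
      f ((p.1 : EE n →L[ℝ] EE n) a, (p.1 : EE n →L[ℝ] EE n) p.2)) := by fun_prop
  obtain ⟨C, hC⟩ : ∃ C, ∀ p ∈ (Set.univ : Set (GG n)) ×ˢ T,
      ‖f ((p.1 : EE n →L[ℝ] EE n) a, (p.1 : EE n →L[ℝ] EE n) p.2)‖ ≤ C :=
    (isCompact_univ.prod hTk).exists_bound_of_continuousOn hF.continuousOn
  set I : EE n → ℝ := fun u =>
    ∫ v in {w : EE n | ‖w‖ = 1 ∧ ⟪u, w⟫ = 0}, f (u, v) ∂(μH[(n : ℝ) - 2]) with hI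
  have hIg : ∀ g : GG n, I ((g : EE n →L[ℝ] EE n) a) =
      ∫ v in T, f ((g : EE n →L[ℝ] EE n) a, (g : EE n →L[ℝ] EE n) v) ∂(μH[(n : ℝ) - 2]) :=
    fun g => tau_eq n _ a g _
  have hIc : Continuous (fun g : GG n => I ((g : EE n →L[ℝ] EE n) a)) := by
    simp_rw [hIg]
    refine continuous_of_dominated (bound := fun _ => C) ?_ ?_ (integrable_const _) ?_
    · intro g
      exact (hF.comp (Continuous.prodMk_right g)).aestronglyMeasurable
    · intro g
      exact (ae_restrict_iff' hTc.measurableSet).2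
        (Filter.Eventually.of_forall fun v hv => hC (g, v) ⟨trivial, hv⟩)
    · exact Filter.Eventually.of_forall fun v => hF.comp (Continuous.prodMk_left v)
  have hIS : ContinuousOn I {w : EE n | ‖w‖ = 1} := by
    rw [continuousOn_iff_continuous_domRestrict]
    let q : GG n → {w : EE n | ‖w‖ = 1} :=
      fun g => ⟨(g : EE n →L[ℝ] EE n) a, by simpa [Unitary.norm_map] using ha⟩
    have hq : Continuous q := hca.subtype_mk _
    have hqs : Function.Surjective q := by
      rintro ⟨u, hu⟩
      obtain ⟨g, hg⟩ := exists_g1 n hn a u ha hu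
      exact ⟨g, Subtype.ext hg⟩
    have hqq : IsQuotientMap q := hq.isClosedMap.isQuotientMap hq hqs
    exact hqq.continuous_iff.2 hIc
  have hIm : AEStronglyMeasurable I ((μH[(n : ℝ) - 1]).restrict {w : EE n | ‖w‖ = 1}) :=
    hIS.aestronglyMeasurable hSc.measurableSet
  have hσ := sigma_eq n hn m _ (sigma_finite n hn) a ha
  have hmap : ∫ u in {w : EE n | ‖w‖ = 1}, I u ∂(μH[(n : ℝ) - 1]) =
      (μH[(n : ℝ) - 1] {w : EE n | ‖w‖ = 1}).toReal *
        ∫ g : GG n, I ((g : EE n →L[ℝ] EE n) a) ∂m := by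
    by_cases h0 : μH[(n : ℝ) - 1] {w : EE n | ‖w‖ = 1} = 0
    · rw [hσ, h0]; simp
    · rw [hσ] at hIm ⊢
      rw [integral_smul_measure, smul_eq_mul, integral_map hca.measurable.aemeasurable]
      exact hIm.mono_ac (Measure.absolutelyContinuous_smul h0)
  rw [hmap]
  congr 1
  simp_rw [hIg]
  have hmg : SigmaFinite m := IsFiniteMeasure.toSigmaFinite m
  have hms : SFinite m := inferInstance
  rw [integral_integral_swap]
  · have hc : ∀ v ∈ T, ∫ g : GG n, f ((g : EE n →L[ℝ] EE n) a, (g : EE n →L[ℝ] EE n) v) ∂m =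
        ∫ g : GG n, f ((g : EE n →L[ℝ] EE n) a, (g : EE n →L[ℝ] EE n) b) ∂m := by
      rintro v ⟨hv, hav⟩
      obtain ⟨k, hk1, hk2⟩ := exists_g2 n hn a b a v ha ha hb hv hab hav
      rw [← integral_mul_right_eq_self
        (fun g : GG n => f ((g : EE n →L[ℝ] EE n) a, (g : EE n →L[ℝ] EE n) b)) k]
      refine integral_congr_ae (Filter.Eventually.of_forall fun g => ?_)
      simp [hk1, hk2]
    rw [setIntegral_congr_fun hTc.measurableSet hc]
    simp [measureReal_def]
  · refine Integrable.of_bound (C := C) hF.aestronglyMeasurable ?_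
    have h1 : ∀ᵐ v ∂((μH[(n : ℝ) - 2]).restrict T), v ∈ T := ae_restrict_mem hTc.measurableSet
    have h2 := (Measure.quasiMeasurePreserving_snd (μ := m)).ae h1
    filter_upwards [h2] with p hp
    exact hC p ⟨trivial, hp⟩

theorem stiefel_fubini (n : ℕ) (hn : 2 ≤ n)
    (f : EuclideanSpace ℝ (Fin n) × EuclideanSpace ℝ (Fin n) → ℝ)
    (hf : Continuous f) :
    ∫ u in {w : EuclideanSpace ℝ (Fin n) | ‖w‖ = 1},
      (∫ v in {w : EuclideanSpace ℝ (Fin n) | ‖w‖ = 1 ∧ ⟪u, w⟫ = 0}, f (u, v)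
        ∂(μH[(n : ℝ) - 2])) ∂(μH[(n : ℝ) - 1])
    = ∫ v in {w : EuclideanSpace ℝ (Fin n) | ‖w‖ = 1},
      (∫ u in {w : EuclideanSpace ℝ (Fin n) | ‖w‖ = 1 ∧ ⟪w, v⟫ = 0}, f (u, v)
        ∂(μH[(n : ℝ) - 2])) ∂(μH[(n : ℝ) - 1]) := by
  obtain ⟨m, hm1, hm2⟩ := exists_m n
  have ho := (EuclideanSpace.basisFun (Fin n) ℝ).orthonormal
  set a := EuclideanSpace.basisFun (Fin n) ℝ ⟨0, by omega⟩
  set b := EuclideanSpace.basisFun (Fin n) ℝ ⟨1, by omega⟩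
  have ha : ‖a‖ = 1 := ho.1 _
  have hb : ‖b‖ = 1 := ho.1 _
  have hab : ⟪a, b⟫ = 0 := ho.2 (by simp)
  rw [main_formula n hn m f hf a b ha hb hab]
  have h2 := main_formula n hn m (fun p => f (p.2, p.1)) (by fun_prop) a b ha hb hab
  simp_rw [real_inner_comm _ _] at h2
  simp_rw [fun (v w : EE n) => real_inner_comm v w]
  rw [h2]
  congr 2
  obtain ⟨k, hk1, hk2⟩ := exists_g2 n hn a b b a ha hb hb ha hab (by rwa [real_inner_comm])
  rw [← integral_mul_right_eq_self _ k]
  refine integral_congr_ae (Filter.Eventually.of_forall fun g => ?_)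
  simp [hk1, hk2]
end

section
/- Let n ≥ 2, let E = EuclideanSpace ℝ n, let S = {w ∈ E : ‖w‖ = 1} be the unit sphere with its (n-1)-dimensional Hausdorff measure σ, and let g : S → ℝ be a continuous function. If there is a constant K ∈ ℝ such that the hemispherical transform of g is constant, i.e. ∫_{v ∈ S, ⟪u,v⟫ ≥ 0} g(v) dσ(v) = K for every unit vector u ∈ S, then g is even, i.e. g(-v) = g(v) for all v ∈ S. -/
open MeasureTheory
open scoped RealInnerProductSpace

lemma hst_finrank (n : ℕ) (hn : 2 ≤ n) (v : EuclideanSpace ℝ (Fin n)) (hv : ‖v‖ = 1) :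
    ((Module.finrank ℝ (Submodule.span ℝ {v})ᗮ : ℕ) : ℝ) = (n : ℝ) - 1 := by
  obtain ⟨m, rfl⟩ : ∃ m, n = m + 1 := ⟨n - 1, by omega⟩
  have : Fact (Module.finrank ℝ (EuclideanSpace ℝ (Fin (m+1))) = m + 1) := ⟨by simp⟩
  have hv0 : v ≠ 0 := by rintro rfl; simp at hv
  rw [Submodule.finrank_orthogonal_span_singleton (n := m) hv0]
  simp

lemma hst_haar (n : ℕ) (hn : 2 ≤ n) (v : EuclideanSpace ℝ (Fin n)) (hv : ‖v‖ = 1) :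
    Measure.IsAddHaarMeasure (μH[(n : ℝ) - 1] : Measure ((Submodule.span ℝ {v})ᗮ : Submodule ℝ _)) := by
  rw [← hst_finrank n hn v hv]
  infer_instance

lemma hst_null (n : ℕ) (hn : 2 ≤ n) (v : EuclideanSpace ℝ (Fin n)) (hv : ‖v‖ = 1) :
    (μH[(n : ℝ) - 1] : Measure (EuclideanSpace ℝ (Fin n))) {w | ‖w‖ = 1 ∧ ⟪v, w⟫ = 0} = 0 := by
  have := hst_haar n hn v hv
  have hn' : (2:ℝ) ≤ n := by exact_mod_cast hn
  have h1 := Measure.addHaar_sphere_of_ne_zero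
    (μH[(n : ℝ) - 1] : Measure ((Submodule.span ℝ {v})ᗮ : Submodule ℝ _)) 0 one_ne_zero
  rw [← (isometry_subtype_coe (s := ((Submodule.span ℝ {v})ᗮ : Set (EuclideanSpace ℝ (Fin n))))).hausdorffMeasure_image
    (Or.inl (by linarith))] at h1
  refine measure_mono_null ?_ h1
  rintro w ⟨hw, hw0⟩
  refine ⟨⟨w, ?_⟩, ?_, rfl⟩
  · exact Submodule.mem_orthogonal_singleton_iff_inner_right.2 hw0
  · simpa using hw

lemma hst_proj (n : ℕ) (v : EuclideanSpace ℝ (Fin n)) (hv : ‖v‖ = 1)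
    (w : EuclideanSpace ℝ (Fin n)) :
    ((Submodule.span ℝ {v})ᗮ.orthogonalProjectionOnto w : EuclideanSpace ℝ (Fin n))
      = w - ⟪v, w⟫ • v := by
  rw [Submodule.coe_orthogonalProjectionOnto_apply, Submodule.starProjection_orthogonal_val,
    Submodule.starProjection_unit_singleton ℝ hv]

lemma hst_pos (n : ℕ) (hn : 2 ≤ n) (v : EuclideanSpace ℝ (Fin n)) (hv : ‖v‖ = 1)
    (U : Set (EuclideanSpace ℝ (Fin n))) (hU : U ∈ nhds v) :
    0 < (μH[(n : ℝ) - 1] : Measure (EuclideanSpace ℝ (Fin n))) (U ∩ {w | ‖w‖ = 1}) := by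
  have := hst_haar n hn v hv
  have hn' : (2:ℝ) ≤ n := by exact_mod_cast hn
  refine lt_of_lt_of_le ?_ (hausdorffMeasure_orthogonalProjectionOnto_le
    ((Submodule.span ℝ {v})ᗮ) _ _ (by linarith))
  let q : ((Submodule.span ℝ {v})ᗮ : Submodule ℝ _) → EuclideanSpace ℝ (Fin n) :=
    fun x => (x : EuclideanSpace ℝ (Fin n)) + √(1 - ‖x‖^2) • v
  have hq : Continuous q := by unfold q; fun_prop
  have hq0 : q 0 = v := by simp [q]
  have hN : q ⁻¹' U ∩ Metric.ball 0 1 ∈ nhds (0 : ((Submodule.span ℝ {v})ᗮ : Submodule ℝ _)) := by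
    refine Filter.inter_mem (hq.continuousAt.preimage_mem_nhds (by rwa [hq0])) ?_
    exact Metric.ball_mem_nhds _ one_pos
  refine lt_of_lt_of_le (Measure.measure_pos_of_mem_nhds _ hN) (measure_mono ?_)
  rintro x ⟨hx, hx1⟩
  have hxv : ⟪v, (x : EuclideanSpace ℝ (Fin n))⟫ = 0 :=
    Submodule.mem_orthogonal_singleton_iff_inner_right.1 x.2
  have hx1 : ‖x‖ < 1 := by simpa using hx1
  refine ⟨q x, ⟨hx, ?_⟩, ?_⟩
  · have : ‖q x‖ ^ 2 = 1 := by
      simp only [q]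
      rw [norm_add_sq_real, inner_smul_right, real_inner_comm, hxv, norm_smul, hv]
      simp only [Real.norm_eq_abs, mul_one, sq_abs, mul_zero, add_zero]
      rw [Real.sq_sqrt (by nlinarith [norm_nonneg x])]
      simp
    have h0 := norm_nonneg (q x)
    show ‖q x‖ = 1
    nlinarith
  · ext1
    rw [hst_proj n v hv]
    simp only [q, inner_add_right, inner_smul_right, hxv, real_inner_self_eq_norm_sq, hv]
    simp

lemma hst_finite (n : ℕ) (hn : 2 ≤ n) :
    (μH[(n : ℝ) - 1] : Measure (EuclideanSpace ℝ (Fin n))) {w | ‖w‖ = 1} < ⊤ := by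
  have hn' : (2:ℝ) ≤ n := by exact_mod_cast hn
  have hS : {w : EuclideanSpace ℝ (Fin n) | ‖w‖ = 1} = Metric.sphere 0 1 := by ext; simp
  have hc : IsCompact {w : EuclideanSpace ℝ (Fin n) | ‖w‖ = 1} := hS ▸ isCompact_sphere 0 1
  refine hc.measure_lt_top_of_nhdsWithin fun v hv => ?_
  have hv : ‖v‖ = 1 := hv
  have := hst_haar n hn v hv
  have hv0 : v ≠ 0 := by rintro rfl; simp at hv
  let f : ((Submodule.span ℝ {v})ᗮ : Submodule ℝ _) → EuclideanSpace ℝ (Fin n) :=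
    fun x => ‖v + (x : EuclideanSpace ℝ (Fin n))‖⁻¹ • (v + (x : EuclideanSpace ℝ (Fin n)))
  have hf : ContDiffAt ℝ 1 f 0 := by
    have h1 : ContDiffAt ℝ 1 (fun x : ((Submodule.span ℝ {v})ᗮ : Submodule ℝ _) =>
        v + (x : EuclideanSpace ℝ (Fin n))) 0 :=
      contDiffAt_const.add ((Submodule.span ℝ {v})ᗮ.subtypeL.contDiff.contDiffAt)
    have h2 := h1.norm ℝ (by simpa using hv0)
    exact (h2.inv (by simp [hv])).smul h1
  obtain ⟨C, t, ht, hL⟩ := hf.exists_lipschitzOnWith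
  obtain ⟨r, hr, hrt⟩ := Metric.mem_nhds_iff.1 ht
  let P := (Submodule.span ℝ {v})ᗮ.orthogonalProjectionOnto
  have hcont : ContinuousAt (fun w => P (⟪v, w⟫⁻¹ • w)) v := by
    have : ContinuousAt (fun w => ⟪v, w⟫⁻¹) v :=
      ContinuousAt.inv₀ (by fun_prop) (by simp [hv])
    have h2 : ContinuousAt (fun w => ⟪v, w⟫⁻¹ • w) v := this.smul continuousAt_id
    exact ContinuousAt.comp (g := P) P.continuous.continuousAt h2
  have hPv : P (⟪v, v⟫⁻¹ • v) = 0 := by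
    ext1; rw [hst_proj n v hv]; simp [hv]
  have hN1 : ∀ᶠ w in nhds v, P (⟪v, w⟫⁻¹ • w) ∈ Metric.ball 0 r :=
    hcont (by simp only [hPv]; exact Metric.ball_mem_nhds _ hr)
  have hN2 : ∀ᶠ w in nhds v, 0 < ⟪v, w⟫ := by
    have : ContinuousAt (fun w => ⟪v, w⟫) v := by fun_prop
    exact this.eventually (lt_mem_nhds (by simp [hv]))
  refine ⟨f '' Metric.ball 0 r, ?_, ?_⟩
  · filter_upwards [nhdsWithin_le_nhds hN1, nhdsWithin_le_nhds hN2, self_mem_nhdsWithin] with w h1 h2 h3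
    have h3 : ‖w‖ = 1 := h3
    refine ⟨_, h1, ?_⟩
    have : v + (P (⟪v, w⟫⁻¹ • w) : EuclideanSpace ℝ (Fin n)) = ⟪v, w⟫⁻¹ • w := by
      rw [hst_proj n v hv, inner_smul_right, inv_mul_cancel₀ h2.ne']
      simp
    simp only [f]
    rw [this, norm_smul, h3, mul_one, Real.norm_eq_abs, abs_of_pos (inv_pos.2 h2), inv_inv, smul_smul,
      mul_inv_cancel₀ h2.ne', one_smul]
  · refine lt_of_le_of_lt ((hL.mono hrt).hausdorffMeasure_image_le (by linarith)) ?_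
    refine ENNReal.mul_lt_top ?_ Metric.isBounded_ball.measure_lt_top
    exact ENNReal.rpow_lt_top_of_nonneg (by linarith) (by simp)

lemma hst_core {n : ℕ} (ν : Measure (EuclideanSpace ℝ (Fin n))) [IsFiniteMeasure ν]
    (h : EuclideanSpace ℝ (Fin n) → ℝ) (hi : Integrable h ν) (e : EuclideanSpace ℝ (Fin n))
    (hν : ∀ᵐ v ∂ν, ‖v‖ = 1 ∧ 0 < ⟪e, v⟫)
    (hz : ∀ u : EuclideanSpace ℝ (Fin n), ∫ v in {v | 0 ≤ ⟪u, v⟫}, h v ∂ν = 0) :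
    h =ᵐ[ν] 0 := by
  let νp := ν.withDensity (fun v => ENNReal.ofReal (h v))
  let νm := ν.withDensity (fun v => ENNReal.ofReal (-h v))
  have : IsFiniteMeasure νp := isFiniteMeasure_withDensity_ofReal hi.2
  have : IsFiniteMeasure νm := isFiniteMeasure_withDensity_ofReal hi.neg.2
  let T : EuclideanSpace ℝ (Fin n) → EuclideanSpace ℝ (Fin n) := fun v => ⟪e, v⟫⁻¹ • v
  have hT : Measurable T := by unfold T; fun_prop
  let N : EuclideanSpace ℝ (Fin n) → EuclideanSpace ℝ (Fin n) := fun v => ‖v‖⁻¹ • v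
  have hN : Measurable N := by unfold N; fun_prop
  have hNT : ∀ᵐ v ∂ν, N (T v) = v := by
    filter_upwards [hν] with v ⟨h1, h2⟩
    simp only [N, T]
    rw [norm_smul, h1, mul_one, Real.norm_eq_abs, abs_of_pos (inv_pos.2 h2), inv_inv, smul_smul,
      mul_inv_cancel₀ h2.ne', one_smul]
  have key : νp.map T = νm.map T := by
    apply Measure.ext_of_charFunDual
    funext L
    rw [charFunDual_eq_charFun_map_one, charFunDual_eq_charFun_map_one]
    congr 1
    apply Measure.ext_of_Ici
    intro t
    rw [Measure.map_apply (by fun_prop) measurableSet_Ici,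
      Measure.map_apply (by fun_prop) measurableSet_Ici]
    have hm1 : MeasurableSet (L ⁻¹' Set.Ici t) := L.continuous.measurable measurableSet_Ici
    rw [Measure.map_apply hT hm1, Measure.map_apply hT hm1]
    have hm : MeasurableSet (T ⁻¹' (L ⁻¹' Set.Ici t)) := hT hm1
    rw [withDensity_apply _ hm, withDensity_apply _ hm]
    obtain ⟨a, ha⟩ := (InnerProductSpace.toDual ℝ (EuclideanSpace ℝ (Fin n))).surjective L
    have hA : (T ⁻¹' (L ⁻¹' Set.Ici t)) =ᵐ[ν] {v | 0 ≤ ⟪a - t • e, v⟫} := by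
      filter_upwards [hν] with v ⟨h1, h2⟩
      apply propext
      show t ≤ L (T v) ↔ 0 ≤ ⟪a - t • e, v⟫
      rw [← ha, InnerProductSpace.toDual_apply_apply, inner_sub_left, inner_smul_left, inner_smul_right,
        sub_nonneg, inv_mul_eq_div, le_div_iff₀ h2]
      simp
    have h0 := hz (a - t • e)
    rw [← setIntegral_congr_set hA, integral_eq_lintegral_pos_part_sub_lintegral_neg_part
      hi.restrict] at h0
    refine (ENNReal.toReal_eq_toReal_iff' ?_ ?_).1 (sub_eq_zero.1 h0)
    · exact (hi.restrict (s := (T ⁻¹' (L ⁻¹' Set.Ici t)))).lintegral_lt_top.ne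
    · exact (hi.neg.restrict (s := (T ⁻¹' (L ⁻¹' Set.Ici t)))).lintegral_lt_top.ne
  have hback : ∀ ρ : Measure (EuclideanSpace ℝ (Fin n)), ρ ≪ ν → (ρ.map T).map N = ρ := by
    intro ρ hρ
    rw [Measure.map_map hN hT, Measure.map_congr (f := N ∘ T) (g := id) (hρ hNT), Measure.map_id]
  have heq : νp = νm := by
    rw [← hback νp (withDensity_absolutelyContinuous _ _),
      ← hback νm (withDensity_absolutelyContinuous _ _), key]
  have := (withDensity_eq_iff hi.1.aemeasurable.ennreal_ofReal hi.neg.1.aemeasurable.ennreal_ofReal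
    hi.lintegral_lt_top.ne).1 heq
  filter_upwards [this] with v hv
  simp only [Pi.zero_apply, Pi.neg_apply] at hv ⊢
  rcases le_total 0 (h v) with h0 | h0
  · rw [ENNReal.ofReal_of_nonpos (by linarith : - h v ≤ 0), ENNReal.ofReal_eq_zero] at hv
    linarith
  · rw [ENNReal.ofReal_of_nonpos h0, eq_comm, ENNReal.ofReal_eq_zero] at hv
    linarith

/-- Integrals of an odd function over intersections of two hemispheres vanish. -/
lemma hst_quarter {n : ℕ} (μ : Measure (EuclideanSpace ℝ (Fin n))) [IsFiniteMeasure μ]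
    (hinv : MeasurePreserving (fun v => -v) μ μ)
    (h : EuclideanSpace ℝ (Fin n) → ℝ) (hi : Integrable h μ) (hodd : ∀ v, h (-v) = - h v)
    (hz : ∀ u : EuclideanSpace ℝ (Fin n), u ≠ 0 → ∫ v in {v | 0 ≤ ⟪u, v⟫}, h v ∂μ = 0)
    (hnull : ∀ u : EuclideanSpace ℝ (Fin n), u ≠ 0 → μ {v | ⟪u, v⟫ = 0} = 0)
    (e : EuclideanSpace ℝ (Fin n)) (he : e ≠ 0) (u : EuclideanSpace ℝ (Fin n)) :
    ∫ v in {v | 0 ≤ ⟪u, v⟫}, h v ∂(μ.restrict {v | 0 < ⟪e, v⟫}) = 0 := by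
  have hm : ∀ u : EuclideanSpace ℝ (Fin n), MeasurableSet {v | 0 ≤ ⟪u, v⟫} := fun u =>
    measurableSet_le measurable_const (by fun_prop)
  have hm' : ∀ u : EuclideanSpace ℝ (Fin n), MeasurableSet {v | 0 < ⟪u, v⟫} := fun u =>
    measurableSet_lt measurable_const (by fun_prop)
  have hae : ∀ u : EuclideanSpace ℝ (Fin n), u ≠ 0 → ∀ᵐ v ∂μ, ⟪u, v⟫ ≠ 0 := fun u hu => by
    rw [ae_iff]; simpa using hnull u hu
  have heq : ∀ u : EuclideanSpace ℝ (Fin n), u ≠ 0 →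
      ({v | 0 < ⟪u, v⟫} : Set (EuclideanSpace ℝ (Fin n))) =ᵐ[μ] {v | 0 ≤ ⟪u, v⟫} := fun u hu => by
    filter_upwards [hae u hu] with v hv
    apply propext
    show 0 < ⟪u, v⟫ ↔ 0 ≤ ⟪u, v⟫
    exact ⟨le_of_lt, fun h => lt_of_le_of_ne h hv.symm⟩
  rw [Measure.restrict_restrict (hm u)]
  by_cases hu : u = 0
  · subst hu
    simp only [inner_zero_left, le_refl, Set.ofPred_true, Set.univ_inter]
    rw [setIntegral_congr_set (heq e he), hz e he]
  -- A: u ≥ 0, e > 0;  B: u ≥ 0, e ≤ 0;  C: e > 0, u < 0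
  have hA1 := integral_inter_add_sdiff (s := {v | 0 ≤ ⟪u, v⟫}) (hm' e) (hi.integrableOn (s := {v | 0 ≤ ⟪u, v⟫}))
  have hA2 := integral_inter_add_sdiff (s := {v | 0 < ⟪e, v⟫}) (hm u) (hi.integrableOn (s := {v | 0 < ⟪e, v⟫}))
  rw [hz u hu] at hA1
  rw [setIntegral_congr_set (heq e he), hz e he, Set.inter_comm] at hA2
  have hBC : ∫ v in {v | 0 ≤ ⟪u, v⟫} \ {v | 0 < ⟪e, v⟫}, h v ∂μ
      = - ∫ v in {v | 0 < ⟪e, v⟫} \ {v | 0 ≤ ⟪u, v⟫}, h v ∂μ := by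
    have h1 := hinv.setIntegral_preimage_emb (MeasurableEquiv.neg _).measurableEmbedding h
      ({v | 0 < ⟪e, v⟫} \ {v | 0 ≤ ⟪u, v⟫})
    simp only [hodd, integral_neg] at h1
    rw [← h1, neg_neg]
    apply setIntegral_congr_set
    filter_upwards [hae u hu, hae e he] with v h1 h2
    apply propext
    show (0 ≤ ⟪u, v⟫ ∧ ¬ 0 < ⟪e, v⟫) ↔ (0 < ⟪e, -v⟫ ∧ ¬ 0 ≤ ⟪u, -v⟫)
    rw [inner_neg_right, inner_neg_right]
    constructor
    · rintro ⟨a, b⟩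
      have := lt_of_le_of_ne a h1.symm
      have := lt_of_le_of_ne (not_lt.1 b) h2
      constructor <;> linarith
    · rintro ⟨a, b⟩
      constructor <;> linarith
  linarith

open MeasureTheory
open scoped RealInnerProductSpace

/-- **A function with constant hemispherical transform is even.**
Let `g` be a continuous function on the unit sphere of `EuclideanSpace ℝ (Fin n)`
(`n ≥ 2`). If the hemispherical transform
`u ↦ ∫_{v ∈ S, ⟪u,v⟫ ≥ 0} g(v) dσ(v)` (with `σ` the `(n-1)`-dimensional Hausdorff
measure) is constantly equal to `K`, then `g` is even on the sphere. -/
theorem constant_hemispherical_transform_even (n : ℕ) (hn : 2 ≤ n)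
    (g : EuclideanSpace ℝ (Fin n) → ℝ)
    (hg : ContinuousOn g {w : EuclideanSpace ℝ (Fin n) | ‖w‖ = 1})
    (K : ℝ)
    (hK : ∀ u : EuclideanSpace ℝ (Fin n), ‖u‖ = 1 →
      ∫ v in {w : EuclideanSpace ℝ (Fin n) | ‖w‖ = 1 ∧ 0 ≤ ⟪u, w⟫}, g v
        ∂(μH[(n : ℝ) - 1]) = K) :
    ∀ v : EuclideanSpace ℝ (Fin n), ‖v‖ = 1 → g (-v) = g v := by

  have hn' : (2:ℝ) ≤ n := by exact_mod_cast hn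
  let S : Set (EuclideanSpace ℝ (Fin n)) := {w | ‖w‖ = 1}
  have hSs : S = Metric.sphere 0 1 := by ext; simp [S]
  have hSc : IsCompact S := hSs ▸ isCompact_sphere 0 1
  have hSm : MeasurableSet S := hSc.measurableSet
  have hSneg : (fun v : EuclideanSpace ℝ (Fin n) => -v) ⁻¹' S = S := by ext; simp [S]
  have hfin : (μH[(n : ℝ) - 1] : Measure (EuclideanSpace ℝ (Fin n))) S < ⊤ := hst_finite n hn
  let μ : Measure (EuclideanSpace ℝ (Fin n)) := (μH[(n : ℝ) - 1]).restrict S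
  have hμf : IsFiniteMeasure μ := ⟨by simpa [μ] using hfin⟩
  have hinv : MeasurePreserving (fun v => -v) μ μ := by
    have h1 := (IsometryEquiv.neg (EuclideanSpace ℝ (Fin n))).measurePreserving_hausdorffMeasure
      ((n : ℝ) - 1)
    have h2 := h1.restrict_preimage hSm
    have h3 : (IsometryEquiv.neg (EuclideanSpace ℝ (Fin n))) ⁻¹' S = S := hSneg
    rw [h3] at h2
    exact h2
  have hgi : Integrable g μ := by
    obtain ⟨C, hC⟩ := hSc.exists_bound_of_continuousOn hg
    refine Integrable.of_bound (hg.aestronglyMeasurable hSm) C ?_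
    filter_upwards [ae_restrict_mem hSm] with v hv using hC v hv
  let h : EuclideanSpace ℝ (Fin n) → ℝ := fun v => g v - g (-v)
  have hgni : Integrable (fun v => g (-v)) μ :=
    hinv.integrable_comp_of_integrable hgi
  have hi : Integrable h μ := hgi.sub hgni
  have hodd : ∀ v, h (-v) = - h v := fun v => by simp [h]
  have hm : ∀ u : EuclideanSpace ℝ (Fin n), MeasurableSet {v | 0 ≤ ⟪u, v⟫} := fun u =>
    measurableSet_le measurable_const (by fun_prop)
  have hnorm : ∀ u : EuclideanSpace ℝ (Fin n), u ≠ 0 → ‖‖u‖⁻¹ • u‖ = 1 := fun u hu => by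
    rw [norm_smul, norm_inv, norm_norm, inv_mul_cancel₀ (norm_ne_zero_iff.2 hu)]
  have hK' : ∀ u : EuclideanSpace ℝ (Fin n), u ≠ 0 → ∫ v in {v | 0 ≤ ⟪u, v⟫}, g v ∂μ = K := by
    intro u hu
    rw [← hK _ (hnorm u hu), Measure.restrict_restrict (hm u)]
    congr 2
    ext w
    simp only [Set.mem_inter_iff, Set.mem_setOf_eq, S, inner_smul_left]
    have : 0 < ‖u‖⁻¹ := by positivity
    simp [this, and_comm]
  have hz : ∀ u : EuclideanSpace ℝ (Fin n), u ≠ 0 → ∫ v in {v | 0 ≤ ⟪u, v⟫}, h v ∂μ = 0 := by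
    intro u hu
    have h1 := hinv.setIntegral_preimage_emb (MeasurableEquiv.neg _).measurableEmbedding g
      {v | 0 ≤ ⟪-u, v⟫}
    rw [hK' _ (neg_ne_zero.2 hu)] at h1
    have h2 : (fun v : EuclideanSpace ℝ (Fin n) => -v) ⁻¹' {v | 0 ≤ ⟪-u, v⟫} = {v | 0 ≤ ⟪u, v⟫} := by
      ext; simp
    rw [h2] at h1
    simp only [h]
    rw [integral_sub hgi.restrict hgni.restrict, h1, hK' u hu, sub_self]
  have hnull : ∀ u : EuclideanSpace ℝ (Fin n), u ≠ 0 → μ {v | ⟪u, v⟫ = 0} = 0 := by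
    intro u hu
    have h1 := hst_null n hn _ (hnorm u hu)
    have hmz : MeasurableSet {v : EuclideanSpace ℝ (Fin n) | ⟪u, v⟫ = 0} :=
      measurableSet_eq_fun (by fun_prop) measurable_const
    rw [Measure.restrict_apply hmz]
    refine measure_mono_null ?_ h1
    rintro w ⟨h2, h3⟩
    have h2 : ⟪u, w⟫ = 0 := h2
    exact ⟨h3, by rw [inner_smul_left, h2, mul_zero]⟩
  intro e he
  have he0 : e ≠ 0 := by rintro rfl; simp at he
  have hme : MeasurableSet {v : EuclideanSpace ℝ (Fin n) | 0 < ⟪e, v⟫} :=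
    measurableSet_lt measurable_const (by fun_prop)
  have hae := hst_core (μ.restrict {v | 0 < ⟪e, v⟫}) h hi.restrict e
    (by
      filter_upwards [ae_restrict_mem hme, ae_restrict_of_ae (ae_restrict_mem hSm)] with v h1 h2
      exact ⟨h2, h1⟩)
    (hst_quarter μ hinv h hi hodd hz hnull e he0)
  by_contra hne
  have hhe : h e ≠ 0 := fun h0 => hne (sub_eq_zero.1 h0).symm
  have hgn : ContinuousOn (fun v => g (-v)) S :=
    hg.comp continuous_neg.continuousOn (fun v hv => by simpa [S] using hv)
  have hcont : ContinuousOn h S := hg.sub hgn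
  have hnear : ∀ᶠ v in nhdsWithin e S, h v ≠ 0 := (hcont e he).eventually_ne hhe
  rw [eventually_nhdsWithin_iff] at hnear
  have hN2 : ∀ᶠ w in nhds e, 0 < ⟪e, w⟫ := by
    have : ContinuousAt (fun w => ⟪e, w⟫) e := by fun_prop
    exact this.eventually (lt_mem_nhds (by simp [he]))
  have hpos := hst_pos n hn e he _ (hnear.and hN2)
  rw [Filter.EventuallyEq, ae_restrict_iff' hme, ae_restrict_iff' hSm, ae_iff] at hae
  refine hpos.ne' (measure_mono_null ?_ hae)
  rintro w ⟨⟨h1, h2⟩, h3⟩ hcon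
  exact h1 h3 (hcon h3 h2)
end
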